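/- Let (H,α) be a monoidal Hom-Hopf algebra and (M,μ) a right (H,α)-Hom-comodule whose coaction ρ_M admits a right (H,α)-colinear retraction λ_M: M⊗H→M (i.e. λ_M∘ρ_M = id_M, λ_M commutes with the automorphisms, and λ_M is colinear for the coaction (m⊗h)↦(μ⁻¹(m)⊗h₁)⊗α(h₂) on M⊗H). Then M is right (H,α)-coflat: for every surjective morphism f:(N,ν)→(W,ω) of left (H,α)-Hom-comodules, the induced map M□_H f: M□_H N→M□_H W is surjective. -/

import Mathlib

open TensorProduct

noncomputable section

/-- A (unital) monoidal Hom-bialgebra, following Caenepeel–Goyvaerts.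
The algebra axioms are stated pointwise, the coalgebra axioms at the level of
linear maps (using the standard vector-space associator to compare the two
sides of Hom-coassociativity). -/
structure MonoidalHomBialgebra (k : Type) [Field k] (H : Type) [AddCommGroup H] [Module k H] where
  mul : H →ₗ[k] H →ₗ[k] H
  one : H
  comul : H →ₗ[k] H ⊗[k] H
  counit : H →ₗ[k] k
  aut : H ≃ₗ[k] H
  hom_assoc : ∀ a b c, mul (aut a) (mul b c) = mul (mul a b) (aut c)
  mulOne : ∀ a, mul a one = aut a
  oneMul : ∀ a, mul one a = aut a
  aut_mul : ∀ a b, aut (mul a b) = mul (aut a) (aut b)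
  aut_one : aut one = one
  coassoc :
    (TensorProduct.assoc k H H H).toLinearMap ∘ₗ
        (TensorProduct.map comul aut.symm.toLinearMap) ∘ₗ comul =
      (TensorProduct.map aut.symm.toLinearMap comul) ∘ₗ comul
  counit_left :
    (TensorProduct.lid k H).toLinearMap ∘ₗ (TensorProduct.map counit LinearMap.id) ∘ₗ comul =
      aut.symm.toLinearMap
  counit_right :
    (TensorProduct.rid k H).toLinearMap ∘ₗ (TensorProduct.map LinearMap.id counit) ∘ₗ comul =
      aut.symm.toLinearMap
  comul_aut :
    comul ∘ₗ aut.toLinearMap = (TensorProduct.map aut.toLinearMap aut.toLinearMap) ∘ₗ comul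
  counit_aut : counit ∘ₗ aut.toLinearMap = counit
  comul_mul :
    comul ∘ₗ TensorProduct.lift mul =
      (TensorProduct.map (TensorProduct.lift mul) (TensorProduct.lift mul)) ∘ₗ
        (TensorProduct.tensorTensorTensorComm k H H H H).toLinearMap ∘ₗ
          (TensorProduct.map comul comul)
  comul_one : comul one = one ⊗ₜ[k] one
  counit_mul : ∀ a b, counit (mul a b) = counit a * counit b
  counit_one : counit one = 1

/-- A monoidal Hom-Hopf algebra: a monoidal Hom-bialgebra with an antipode. -/
structure MonoidalHomHopf (k : Type) [Field k] (H : Type) [AddCommGroup H] [Module k H]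
    extends MonoidalHomBialgebra k H where
  antipode : H →ₗ[k] H
  antipode_aut : antipode ∘ₗ aut.toLinearMap = aut.toLinearMap ∘ₗ antipode
  antipode_mul_left :
    TensorProduct.lift mul ∘ₗ (TensorProduct.map antipode LinearMap.id) ∘ₗ comul =
      LinearMap.toSpanSingleton k H one ∘ₗ counit
  antipode_mul_right :
    TensorProduct.lift mul ∘ₗ (TensorProduct.map LinearMap.id antipode) ∘ₗ comul =
      LinearMap.toSpanSingleton k H one ∘ₗ counit

variable {k : Type} [Field k] {H : Type} [AddCommGroup H] [Module k H]

/-- A right (H,α)-Hom-comodule. -/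
structure HomComodule (Hb : MonoidalHomBialgebra k H) (M : Type) [AddCommGroup M] [Module k M] where
  coact : M →ₗ[k] M ⊗[k] H
  aut : M ≃ₗ[k] M
  coassoc :
    (TensorProduct.map aut.symm.toLinearMap Hb.comul) ∘ₗ coact =
      (TensorProduct.assoc k M H H).toLinearMap ∘ₗ
        (TensorProduct.map coact Hb.aut.symm.toLinearMap) ∘ₗ coact
  counit :
    (TensorProduct.rid k M).toLinearMap ∘ₗ (TensorProduct.map LinearMap.id Hb.counit) ∘ₗ coact =
      aut.symm.toLinearMap
  coact_aut :
    coact ∘ₗ aut.toLinearMap = (TensorProduct.map aut.toLinearMap Hb.aut.toLinearMap) ∘ₗ coact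

/-- A left (H,α)-Hom-comodule. -/
structure HomLeftComodule (Hb : MonoidalHomBialgebra k H) (M : Type) [AddCommGroup M] [Module k M] where
  coact : M →ₗ[k] H ⊗[k] M
  aut : M ≃ₗ[k] M
  coassoc :
    (TensorProduct.map Hb.comul aut.symm.toLinearMap) ∘ₗ coact =
      (TensorProduct.assoc k H H M).symm.toLinearMap ∘ₗ
        (TensorProduct.map Hb.aut.symm.toLinearMap coact) ∘ₗ coact
  counit :
    (TensorProduct.lid k M).toLinearMap ∘ₗ (TensorProduct.map Hb.counit LinearMap.id) ∘ₗ coact =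
      aut.symm.toLinearMap
  coact_aut :
    coact ∘ₗ aut.toLinearMap = (TensorProduct.map Hb.aut.toLinearMap aut.toLinearMap) ∘ₗ coact

/-- A right (H,α)-Hom-comodule algebra. -/
structure HomComoduleAlgebra (Hb : MonoidalHomBialgebra k H) (A : Type) [AddCommGroup A] [Module k A] where
  mul : A →ₗ[k] A →ₗ[k] A
  one : A
  aut : A ≃ₗ[k] A
  hom_assoc : ∀ a b c, mul (aut a) (mul b c) = mul (mul a b) (aut c)
  mulOne : ∀ a, mul a one = aut a
  oneMul : ∀ a, mul one a = aut a
  aut_mul : ∀ a b, aut (mul a b) = mul (aut a) (aut b)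
  aut_one : aut one = one
  coact : A →ₗ[k] A ⊗[k] H
  coassoc :
    (TensorProduct.map aut.symm.toLinearMap Hb.comul) ∘ₗ coact =
      (TensorProduct.assoc k A H H).toLinearMap ∘ₗ
        (TensorProduct.map coact Hb.aut.symm.toLinearMap) ∘ₗ coact
  counit :
    (TensorProduct.rid k A).toLinearMap ∘ₗ (TensorProduct.map LinearMap.id Hb.counit) ∘ₗ coact =
      aut.symm.toLinearMap
  coact_aut :
    coact ∘ₗ aut.toLinearMap = (TensorProduct.map aut.toLinearMap Hb.aut.toLinearMap) ∘ₗ coact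
  coact_mul :
    coact ∘ₗ TensorProduct.lift mul =
      (TensorProduct.map (TensorProduct.lift mul) (TensorProduct.lift Hb.mul)) ∘ₗ
        (TensorProduct.tensorTensorTensorComm k A H A H).toLinearMap ∘ₗ
          (TensorProduct.map coact coact)
  coact_one : coact one = one ⊗ₜ[k] Hb.one

variable {A : Type} [AddCommGroup A] [Module k A]

/-- A right (A,β)-Hom-module. -/
structure HomModule {Hb : MonoidalHomBialgebra k H} (Ac : HomComoduleAlgebra Hb A)
    (M : Type) [AddCommGroup M] [Module k M] where
  act : M →ₗ[k] A →ₗ[k] M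
  aut : M ≃ₗ[k] M
  act_act : ∀ m a b, act (act m a) (Ac.aut b) = act (aut m) (Ac.mul a b)
  act_one : ∀ m, act m Ac.one = aut m
  aut_act : ∀ m a, aut (act m a) = act (aut m) (Ac.aut a)

/-- A right Hom-module over the subalgebra of `A` carved out by `Bset`
(typically the coinvariants `B = A^{co H}`): the action is a bilinear map
`M × A → M` whose Hom-module axioms are only required on `Bset`. -/
structure HomModuleOn {Hb : MonoidalHomBialgebra k H} (Ac : HomComoduleAlgebra Hb A)
    (Bset : Set A) (M : Type) [AddCommGroup M] [Module k M] where
  act : M →ₗ[k] A →ₗ[k] M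
  aut : M ≃ₗ[k] M
  act_act : ∀ m, ∀ b ∈ Bset, ∀ b' ∈ Bset, act (act m b) (Ac.aut b') = act (aut m) (Ac.mul b b')
  act_one : ∀ m, act m Ac.one = aut m
  aut_act : ∀ m, ∀ b ∈ Bset, aut (act m b) = act (aut m) (Ac.aut b)

/-- A left Hom-module over the subalgebra of `A` carved out by `Bset`. -/
structure HomLeftModuleOn {Hb : MonoidalHomBialgebra k H} (Ac : HomComoduleAlgebra Hb A)
    (Bset : Set A) (M : Type) [AddCommGroup M] [Module k M] where
  act : A →ₗ[k] M →ₗ[k] M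
  aut : M ≃ₗ[k] M
  act_act : ∀ m, ∀ b ∈ Bset, ∀ b' ∈ Bset, act (Ac.aut b) (act b' m) = act (Ac.mul b b') (aut m)
  act_one : ∀ m, act Ac.one m = aut m
  aut_act : ∀ m, ∀ b ∈ Bset, aut (act b m) = act (Ac.aut b) (aut m)

/-- A right-right (H,A)-Hom-Hopf module (a relative Hom-Hopf module). -/
structure HomHopfModule {Hb : MonoidalHomBialgebra k H} (Ac : HomComoduleAlgebra Hb A)
    (N : Type) [AddCommGroup N] [Module k N] where
  act : N →ₗ[k] A →ₗ[k] N
  aut : N ≃ₗ[k] N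
  act_act : ∀ n a b, act (act n a) (Ac.aut b) = act (aut n) (Ac.mul a b)
  act_one : ∀ n, act n Ac.one = aut n
  aut_act : ∀ n a, aut (act n a) = act (aut n) (Ac.aut a)
  coact : N →ₗ[k] N ⊗[k] H
  coassoc :
    (TensorProduct.map aut.symm.toLinearMap Hb.comul) ∘ₗ coact =
      (TensorProduct.assoc k N H H).toLinearMap ∘ₗ
        (TensorProduct.map coact Hb.aut.symm.toLinearMap) ∘ₗ coact
  counit :
    (TensorProduct.rid k N).toLinearMap ∘ₗ (TensorProduct.map LinearMap.id Hb.counit) ∘ₗ coact =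
      aut.symm.toLinearMap
  coact_aut :
    coact ∘ₗ aut.toLinearMap = (TensorProduct.map aut.toLinearMap Hb.aut.toLinearMap) ∘ₗ coact
  compat :
    coact ∘ₗ TensorProduct.lift act =
      (TensorProduct.map (TensorProduct.lift act) (TensorProduct.lift Hb.mul)) ∘ₗ
        (TensorProduct.tensorTensorTensorComm k N H A H).toLinearMap ∘ₗ
          (TensorProduct.map coact Ac.coact)

/-- A left-right (H,A)-Hom-Hopf module. -/
structure LRHomHopfModule {Hb : MonoidalHomBialgebra k H} (Ac : HomComoduleAlgebra Hb A)
    (N : Type) [AddCommGroup N] [Module k N] where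
  act : A →ₗ[k] N →ₗ[k] N
  aut : N ≃ₗ[k] N
  act_act : ∀ n a b, act (Ac.aut a) (act b n) = act (Ac.mul a b) (aut n)
  act_one : ∀ n, act Ac.one n = aut n
  aut_act : ∀ n a, aut (act a n) = act (Ac.aut a) (aut n)
  coact : N →ₗ[k] N ⊗[k] H
  coassoc :
    (TensorProduct.map aut.symm.toLinearMap Hb.comul) ∘ₗ coact =
      (TensorProduct.assoc k N H H).toLinearMap ∘ₗ
        (TensorProduct.map coact Hb.aut.symm.toLinearMap) ∘ₗ coact
  counit :
    (TensorProduct.rid k N).toLinearMap ∘ₗ (TensorProduct.map LinearMap.id Hb.counit) ∘ₗ coact =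
      aut.symm.toLinearMap
  coact_aut :
    coact ∘ₗ aut.toLinearMap = (TensorProduct.map aut.toLinearMap Hb.aut.toLinearMap) ∘ₗ coact
  compat :
    coact ∘ₗ TensorProduct.lift act =
      (TensorProduct.map (TensorProduct.lift act) (TensorProduct.lift Hb.mul)) ∘ₗ
        (TensorProduct.tensorTensorTensorComm k A H N H).toLinearMap ∘ₗ
          (TensorProduct.map Ac.coact coact)

/-- Coinvariants (as a set) of a coaction `coact` with structure automorphism `autM`. -/
def coinvSetOf {M : Type} [AddCommGroup M] [Module k M] (oneH : H)
    (coact : M →ₗ[k] M ⊗[k] H) (autM : M ≃ₗ[k] M) : Set M :=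
  {m | coact m = autM.symm m ⊗ₜ[k] oneH}

/-- Coinvariants as a submodule. -/
def coinvSubmoduleOf {M : Type} [AddCommGroup M] [Module k M] (oneH : H)
    (coact : M →ₗ[k] M ⊗[k] H) (autM : M ≃ₗ[k] M) : Submodule k M :=
  LinearMap.ker (coact - ((TensorProduct.mk k M H).flip oneH) ∘ₗ autM.symm.toLinearMap)

/-- The coinvariants `B = A^{co H}` of a Hom-comodule algebra. -/
def coinvA {Hb : MonoidalHomBialgebra k H} (Ac : HomComoduleAlgebra Hb A) : Set A :=
  coinvSetOf Hb.one Ac.coact Ac.aut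

/-- The defining relations of the tensor product `M ⊗_B A` for a right `B`-Hom-module `M`. -/
def relSubR {M : Type} [AddCommGroup M] [Module k M]
    (mulA : A →ₗ[k] A →ₗ[k] A) (autA : A ≃ₗ[k] A) (Bset : Set A)
    (act : M →ₗ[k] A →ₗ[k] M) (autM : M ≃ₗ[k] M) : Submodule k (M ⊗[k] A) :=
  Submodule.span k
    {x | ∃ m a b, b ∈ Bset ∧ x = act m b ⊗ₜ[k] autA a - autM m ⊗ₜ[k] mulA b a}

/-- The defining relations of the tensor product `A ⊗_B M` for a left `B`-Hom-module `M`. -/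
def relSubL {M : Type} [AddCommGroup M] [Module k M]
    (mulA : A →ₗ[k] A →ₗ[k] A) (autA : A ≃ₗ[k] A) (Bset : Set A)
    (act : A →ₗ[k] M →ₗ[k] M) (autM : M ≃ₗ[k] M) : Submodule k (A ⊗[k] M) :=
  Submodule.span k
    {x | ∃ a m b, b ∈ Bset ∧ x = autA a ⊗ₜ[k] act b m - mulA a b ⊗ₜ[k] autM m}

/-- The cotensor product `X □_H V` of a right Hom-comodule and a left Hom-comodule,
as a submodule of `X ⊗ V`. -/
def cotensorSub {X V : Type} [AddCommGroup X] [Module k X] [AddCommGroup V] [Module k V]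
    (coactX : X →ₗ[k] X ⊗[k] H) (autX : X ≃ₗ[k] X)
    (coactV : V →ₗ[k] H ⊗[k] V) (autV : V ≃ₗ[k] V) : Submodule k (X ⊗[k] V) :=
  LinearMap.ker
    ((TensorProduct.map coactX autV.symm.toLinearMap) -
      ((TensorProduct.assoc k X H V).symm.toLinearMap ∘ₗ
        TensorProduct.map autX.symm.toLinearMap coactV))

/-- The canonical Galois map at the level of `A ⊗ A`:
`a ⊗ b ↦ β⁻¹(a)·b₍₀₎ ⊗ α(b₍₁₎)`. -/
def canPreLin {Hb : MonoidalHomBialgebra k H} (Ac : HomComoduleAlgebra Hb A) :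
    A ⊗[k] A →ₗ[k] A ⊗[k] H :=
  (TensorProduct.map (TensorProduct.lift Ac.mul) Hb.aut.toLinearMap) ∘ₗ
    (TensorProduct.assoc k A A H).symm.toLinearMap ∘ₗ
      (TensorProduct.map Ac.aut.symm.toLinearMap Ac.coact)

/-- The second canonical Galois map at the level of `A ⊗ A`:
`a ⊗ b ↦ a₍₀₎·β⁻¹(b) ⊗ α(a₍₁₎)`. -/
def canPreLin' {Hb : MonoidalHomBialgebra k H} (Ac : HomComoduleAlgebra Hb A) :
    A ⊗[k] A →ₗ[k] A ⊗[k] H :=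
  (TensorProduct.map (TensorProduct.lift Ac.mul) Hb.aut.toLinearMap) ∘ₗ
    (TensorProduct.assoc k A A H).symm.toLinearMap ∘ₗ
      (TensorProduct.map LinearMap.id (TensorProduct.comm k H A).toLinearMap) ∘ₗ
        (TensorProduct.assoc k A H A).toLinearMap ∘ₗ
          (TensorProduct.map Ac.coact Ac.aut.symm.toLinearMap)

/-- `φ : H → A` is a total integral. -/
def IsTotalIntegral {Hb : MonoidalHomBialgebra k H} (Ac : HomComoduleAlgebra Hb A)
    (φ : H →ₗ[k] A) : Prop :=
  φ ∘ₗ Hb.aut.toLinearMap = Ac.aut.toLinearMap ∘ₗ φ ∧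
    Ac.coact ∘ₗ φ = (TensorProduct.map φ LinearMap.id) ∘ₗ Hb.comul ∧
      φ Hb.one = Ac.one

/-- The Hom-comodule structure on `M ⊗ A` inducing that of `M ⊗_B A`:
`m ⊗ a ↦ (μ⁻¹(m) ⊗ a₍₀₎) ⊗ α(a₍₁₎)`. -/
def quotCoactPreR {Hb : MonoidalHomBialgebra k H} (Ac : HomComoduleAlgebra Hb A)
    {M : Type} [AddCommGroup M] [Module k M] (autM : M ≃ₗ[k] M) :
    (M ⊗[k] A) →ₗ[k] (M ⊗[k] A) ⊗[k] H :=
  (TensorProduct.assoc k M A H).symm.toLinearMap ∘ₗ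
    TensorProduct.map autM.symm.toLinearMap
      ((TensorProduct.map LinearMap.id Hb.aut.toLinearMap) ∘ₗ Ac.coact)

/-- The Hom-comodule structure on `A ⊗ M` inducing that of `A ⊗_B M`:
`a ⊗ m ↦ (a₍₀₎ ⊗ μ⁻¹(m)) ⊗ α(a₍₁₎)`. -/
def quotCoactPreL {Hb : MonoidalHomBialgebra k H} (Ac : HomComoduleAlgebra Hb A)
    {M : Type} [AddCommGroup M] [Module k M] (autM : M ≃ₗ[k] M) :
    (A ⊗[k] M) →ₗ[k] (A ⊗[k] M) ⊗[k] H :=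
  (TensorProduct.assoc k A M H).symm.toLinearMap ∘ₗ
    (TensorProduct.map LinearMap.id (TensorProduct.comm k H M).toLinearMap) ∘ₗ
      (TensorProduct.assoc k A H M).toLinearMap ∘ₗ
        TensorProduct.map
          ((TensorProduct.map LinearMap.id Hb.aut.toLinearMap) ∘ₗ Ac.coact)
          autM.symm.toLinearMap

/-- Bijectivity of the adjunction unit `η_M : M → (M ⊗_B A)^{co H}`, `m ↦ μ⁻¹(m) ⊗ 1_A`,
for a right `B`-Hom-module `M`.  Since the Hom-comodule structure of `M ⊗_B A` is the
one induced from `M ⊗ A`, it is quantified over all maps `ρbar` (resp. `θ`) induced by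
the comodule structure (resp. by `μ⁻¹ ⊗ β⁻¹`) on `M ⊗ A`. -/
def UnitBijectiveR {Hb : MonoidalHomBialgebra k H} (Ac : HomComoduleAlgebra Hb A)
    (Bset : Set A) {M : Type} [AddCommGroup M] [Module k M]
    (S : HomModuleOn Ac Bset M) : Prop :=
  ∀ (ρbar : ((M ⊗[k] A) ⧸ relSubR Ac.mul Ac.aut Bset S.act S.aut) →ₗ[k]
      ((M ⊗[k] A) ⧸ relSubR Ac.mul Ac.aut Bset S.act S.aut) ⊗[k] H)
    (θ : ((M ⊗[k] A) ⧸ relSubR Ac.mul Ac.aut Bset S.act S.aut) →ₗ[k]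
      ((M ⊗[k] A) ⧸ relSubR Ac.mul Ac.aut Bset S.act S.aut)),
    ρbar ∘ₗ (relSubR Ac.mul Ac.aut Bset S.act S.aut).mkQ =
      (TensorProduct.map (relSubR Ac.mul Ac.aut Bset S.act S.aut).mkQ LinearMap.id) ∘ₗ
        quotCoactPreR Ac S.aut →
    θ ∘ₗ (relSubR Ac.mul Ac.aut Bset S.act S.aut).mkQ =
      (relSubR Ac.mul Ac.aut Bset S.act S.aut).mkQ ∘ₗ
        TensorProduct.map S.aut.symm.toLinearMap Ac.aut.symm.toLinearMap →
    ((∀ m : M, ρbar ((relSubR Ac.mul Ac.aut Bset S.act S.aut).mkQ (S.aut.symm m ⊗ₜ[k] Ac.one)) =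
        θ ((relSubR Ac.mul Ac.aut Bset S.act S.aut).mkQ (S.aut.symm m ⊗ₜ[k] Ac.one)) ⊗ₜ[k] Hb.one) ∧
      Function.Injective
        (fun m : M => (relSubR Ac.mul Ac.aut Bset S.act S.aut).mkQ (S.aut.symm m ⊗ₜ[k] Ac.one)) ∧
      ∀ x, ρbar x = θ x ⊗ₜ[k] Hb.one →
        ∃ m : M, (relSubR Ac.mul Ac.aut Bset S.act S.aut).mkQ (S.aut.symm m ⊗ₜ[k] Ac.one) = x)

/-- The relations of `N^{co H} ⊗_B A` for a right (H,A)-Hom-Hopf module `N`;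
the closure of the coinvariants under the `B`-action and the automorphism is
encoded by existential membership. -/
def relCoinvR {Hb : MonoidalHomBialgebra k H} (Ac : HomComoduleAlgebra Hb A)
    (Bset : Set A) {N : Type} [AddCommGroup N] [Module k N]
    (P : HomHopfModule Ac N) :
    Submodule k ((coinvSubmoduleOf Hb.one P.coact P.aut : Submodule k N) ⊗[k] A) :=
  Submodule.span k
    {x | ∃ (n n' n'' : coinvSubmoduleOf Hb.one P.coact P.aut) (a b : A), b ∈ Bset ∧
      (n' : N) = P.act n b ∧ (n'' : N) = P.aut n ∧
      x = n' ⊗ₜ[k] Ac.aut a - n'' ⊗ₜ[k] Ac.mul b a}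

/-- The counit of the adjunction at the level of `N^{co H} ⊗ A`: `n ⊗ a ↦ n · a`. -/
def counitPre {Hb : MonoidalHomBialgebra k H} (Ac : HomComoduleAlgebra Hb A)
    {N : Type} [AddCommGroup N] [Module k N] (P : HomHopfModule Ac N) :
    ((coinvSubmoduleOf Hb.one P.coact P.aut : Submodule k N) ⊗[k] A) →ₗ[k] N :=
  TensorProduct.lift (P.act ∘ₗ (coinvSubmoduleOf Hb.one P.coact P.aut).subtype)

/-- Bijectivity of the adjunction counit `ε_N : N^{co H} ⊗_B A → N`, `n ⊗ a ↦ n·a`: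
equivalently, the lift `N^{co H} ⊗ A → N` is surjective and its kernel is exactly
the defining relations of `⊗_B`. -/
def CounitBijectiveR {Hb : MonoidalHomBialgebra k H} (Ac : HomComoduleAlgebra Hb A)
    (Bset : Set A) {N : Type} [AddCommGroup N] [Module k N]
    (P : HomHopfModule Ac N) : Prop :=
  Function.Surjective (counitPre Ac P) ∧ LinearMap.ker (counitPre Ac P) = relCoinvR Ac Bset P

/-- Bijectivity of the adjunction unit `η'_M : M → (A ⊗_B M)^{co H}`, `m ↦ 1_A ⊗ μ⁻¹(m)`,
for a left `B`-Hom-module `M`. -/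
def UnitBijectiveL {Hb : MonoidalHomBialgebra k H} (Ac : HomComoduleAlgebra Hb A)
    (Bset : Set A) {M : Type} [AddCommGroup M] [Module k M]
    (S : HomLeftModuleOn Ac Bset M) : Prop :=
  ∀ (ρbar : ((A ⊗[k] M) ⧸ relSubL Ac.mul Ac.aut Bset S.act S.aut) →ₗ[k]
      ((A ⊗[k] M) ⧸ relSubL Ac.mul Ac.aut Bset S.act S.aut) ⊗[k] H)
    (θ : ((A ⊗[k] M) ⧸ relSubL Ac.mul Ac.aut Bset S.act S.aut) →ₗ[k]
      ((A ⊗[k] M) ⧸ relSubL Ac.mul Ac.aut Bset S.act S.aut)),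
    ρbar ∘ₗ (relSubL Ac.mul Ac.aut Bset S.act S.aut).mkQ =
      (TensorProduct.map (relSubL Ac.mul Ac.aut Bset S.act S.aut).mkQ LinearMap.id) ∘ₗ
        quotCoactPreL Ac S.aut →
    θ ∘ₗ (relSubL Ac.mul Ac.aut Bset S.act S.aut).mkQ =
      (relSubL Ac.mul Ac.aut Bset S.act S.aut).mkQ ∘ₗ
        TensorProduct.map Ac.aut.symm.toLinearMap S.aut.symm.toLinearMap →
    ((∀ m : M, ρbar ((relSubL Ac.mul Ac.aut Bset S.act S.aut).mkQ (Ac.one ⊗ₜ[k] S.aut.symm m)) =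
        θ ((relSubL Ac.mul Ac.aut Bset S.act S.aut).mkQ (Ac.one ⊗ₜ[k] S.aut.symm m)) ⊗ₜ[k] Hb.one) ∧
      Function.Injective
        (fun m : M => (relSubL Ac.mul Ac.aut Bset S.act S.aut).mkQ (Ac.one ⊗ₜ[k] S.aut.symm m)) ∧
      ∀ x, ρbar x = θ x ⊗ₜ[k] Hb.one →
        ∃ m : M, (relSubL Ac.mul Ac.aut Bset S.act S.aut).mkQ (Ac.one ⊗ₜ[k] S.aut.symm m) = x)

/-- The relations of `A ⊗_B N^{co H}` for a left-right (H,A)-Hom-Hopf module `N`. -/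
def relCoinvL {Hb : MonoidalHomBialgebra k H} (Ac : HomComoduleAlgebra Hb A)
    (Bset : Set A) {N : Type} [AddCommGroup N] [Module k N]
    (P : LRHomHopfModule Ac N) :
    Submodule k (A ⊗[k] (coinvSubmoduleOf Hb.one P.coact P.aut : Submodule k N)) :=
  Submodule.span k
    {x | ∃ (n n' n'' : coinvSubmoduleOf Hb.one P.coact P.aut) (a b : A), b ∈ Bset ∧
      (n' : N) = P.act b n ∧ (n'' : N) = P.aut n ∧
      x = Ac.aut a ⊗ₜ[k] n' - Ac.mul a b ⊗ₜ[k] n''}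

/-- The counit at the level of `A ⊗ N^{co H}`: `a ⊗ n ↦ a · n`. -/
def counitPreL {Hb : MonoidalHomBialgebra k H} (Ac : HomComoduleAlgebra Hb A)
    {N : Type} [AddCommGroup N] [Module k N] (P : LRHomHopfModule Ac N) :
    (A ⊗[k] (coinvSubmoduleOf Hb.one P.coact P.aut : Submodule k N)) →ₗ[k] N :=
  TensorProduct.lift (P.act.compl₂ (coinvSubmoduleOf Hb.one P.coact P.aut).subtype)

/-- Bijectivity of the counit `ε'_N : A ⊗_B N^{co H} → N`. -/
def CounitBijectiveL {Hb : MonoidalHomBialgebra k H} (Ac : HomComoduleAlgebra Hb A)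
    (Bset : Set A) {N : Type} [AddCommGroup N] [Module k N]
    (P : LRHomHopfModule Ac N) : Prop :=
  Function.Surjective (counitPreL Ac P) ∧ LinearMap.ker (counitPreL Ac P) = relCoinvL Ac Bset P

/-- A morphism of right `B`-Hom-modules. -/
def IsHomModuleOnHomR {Hb : MonoidalHomBialgebra k H} (Ac : HomComoduleAlgebra Hb A)
    (Bset : Set A) {M₁ M₂ : Type} [AddCommGroup M₁] [Module k M₁] [AddCommGroup M₂] [Module k M₂]
    (S₁ : HomModuleOn Ac Bset M₁) (S₂ : HomModuleOn Ac Bset M₂) (f : M₁ →ₗ[k] M₂) : Prop :=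
  (∀ m, ∀ b ∈ Bset, f (S₁.act m b) = S₂.act (f m) b) ∧ ∀ m, f (S₁.aut m) = S₂.aut (f m)

/-- A morphism of left `B`-Hom-modules. -/
def IsHomModuleOnHomL {Hb : MonoidalHomBialgebra k H} (Ac : HomComoduleAlgebra Hb A)
    (Bset : Set A) {M₁ M₂ : Type} [AddCommGroup M₁] [Module k M₁] [AddCommGroup M₂] [Module k M₂]
    (S₁ : HomLeftModuleOn Ac Bset M₁) (S₂ : HomLeftModuleOn Ac Bset M₂) (f : M₁ →ₗ[k] M₂) : Prop :=
  (∀ m, ∀ b ∈ Bset, f (S₁.act b m) = S₂.act b (f m)) ∧ ∀ m, f (S₁.aut m) = S₂.aut (f m)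

/-- `A` is faithfully flat as a left `B`-Hom-module: the induced functor `− ⊗_B A`
on right `B`-Hom-modules preserves and reflects exactness. -/
def FaithfullyFlatLeftOf {Hb : MonoidalHomBialgebra k H} (Ac : HomComoduleAlgebra Hb A)
    (Bset : Set A) : Prop :=
  ∀ (M₁ M₂ M₃ : Type) [AddCommGroup M₁] [Module k M₁] [AddCommGroup M₂] [Module k M₂]
    [AddCommGroup M₃] [Module k M₃]
    (S₁ : HomModuleOn Ac Bset M₁) (S₂ : HomModuleOn Ac Bset M₂) (S₃ : HomModuleOn Ac Bset M₃)
    (f : M₁ →ₗ[k] M₂) (g : M₂ →ₗ[k] M₃),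
    IsHomModuleOnHomR Ac Bset S₁ S₂ f → IsHomModuleOnHomR Ac Bset S₂ S₃ g →
    ∀ (fbar : ((M₁ ⊗[k] A) ⧸ relSubR Ac.mul Ac.aut Bset S₁.act S₁.aut) →ₗ[k]
        ((M₂ ⊗[k] A) ⧸ relSubR Ac.mul Ac.aut Bset S₂.act S₂.aut))
      (gbar : ((M₂ ⊗[k] A) ⧸ relSubR Ac.mul Ac.aut Bset S₂.act S₂.aut) →ₗ[k]
        ((M₃ ⊗[k] A) ⧸ relSubR Ac.mul Ac.aut Bset S₃.act S₃.aut)),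
      fbar ∘ₗ (relSubR Ac.mul Ac.aut Bset S₁.act S₁.aut).mkQ =
        (relSubR Ac.mul Ac.aut Bset S₂.act S₂.aut).mkQ ∘ₗ TensorProduct.map f LinearMap.id →
      gbar ∘ₗ (relSubR Ac.mul Ac.aut Bset S₂.act S₂.aut).mkQ =
        (relSubR Ac.mul Ac.aut Bset S₃.act S₃.aut).mkQ ∘ₗ TensorProduct.map g LinearMap.id →
      (LinearMap.range f = LinearMap.ker g ↔ LinearMap.range fbar = LinearMap.ker gbar)

/-- `A` is faithfully flat as a right `B`-Hom-module: the induced functor `A ⊗_B −`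
on left `B`-Hom-modules preserves and reflects exactness. -/
def FaithfullyFlatRightOf {Hb : MonoidalHomBialgebra k H} (Ac : HomComoduleAlgebra Hb A)
    (Bset : Set A) : Prop :=
  ∀ (M₁ M₂ M₃ : Type) [AddCommGroup M₁] [Module k M₁] [AddCommGroup M₂] [Module k M₂]
    [AddCommGroup M₃] [Module k M₃]
    (S₁ : HomLeftModuleOn Ac Bset M₁) (S₂ : HomLeftModuleOn Ac Bset M₂)
    (S₃ : HomLeftModuleOn Ac Bset M₃)
    (f : M₁ →ₗ[k] M₂) (g : M₂ →ₗ[k] M₃),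
    IsHomModuleOnHomL Ac Bset S₁ S₂ f → IsHomModuleOnHomL Ac Bset S₂ S₃ g →
    ∀ (fbar : ((A ⊗[k] M₁) ⧸ relSubL Ac.mul Ac.aut Bset S₁.act S₁.aut) →ₗ[k]
        ((A ⊗[k] M₂) ⧸ relSubL Ac.mul Ac.aut Bset S₂.act S₂.aut))
      (gbar : ((A ⊗[k] M₂) ⧸ relSubL Ac.mul Ac.aut Bset S₂.act S₂.aut) →ₗ[k]
        ((A ⊗[k] M₃) ⧸ relSubL Ac.mul Ac.aut Bset S₃.act S₃.aut)),
      fbar ∘ₗ (relSubL Ac.mul Ac.aut Bset S₁.act S₁.aut).mkQ =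
        (relSubL Ac.mul Ac.aut Bset S₂.act S₂.aut).mkQ ∘ₗ TensorProduct.map LinearMap.id f →
      gbar ∘ₗ (relSubL Ac.mul Ac.aut Bset S₂.act S₂.aut).mkQ =
        (relSubL Ac.mul Ac.aut Bset S₃.act S₃.aut).mkQ ∘ₗ TensorProduct.map LinearMap.id g →
      (LinearMap.range f = LinearMap.ker g ↔ LinearMap.range fbar = LinearMap.ker gbar)

/-- `A` is flat as a left `B`-Hom-module: `− ⊗_B A` preserves exactness. -/
def FlatLeftOf {Hb : MonoidalHomBialgebra k H} (Ac : HomComoduleAlgebra Hb A)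
    (Bset : Set A) : Prop :=
  ∀ (M₁ M₂ M₃ : Type) [AddCommGroup M₁] [Module k M₁] [AddCommGroup M₂] [Module k M₂]
    [AddCommGroup M₃] [Module k M₃]
    (S₁ : HomModuleOn Ac Bset M₁) (S₂ : HomModuleOn Ac Bset M₂) (S₃ : HomModuleOn Ac Bset M₃)
    (f : M₁ →ₗ[k] M₂) (g : M₂ →ₗ[k] M₃),
    IsHomModuleOnHomR Ac Bset S₁ S₂ f → IsHomModuleOnHomR Ac Bset S₂ S₃ g →
    ∀ (fbar : ((M₁ ⊗[k] A) ⧸ relSubR Ac.mul Ac.aut Bset S₁.act S₁.aut) →ₗ[k]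
        ((M₂ ⊗[k] A) ⧸ relSubR Ac.mul Ac.aut Bset S₂.act S₂.aut))
      (gbar : ((M₂ ⊗[k] A) ⧸ relSubR Ac.mul Ac.aut Bset S₂.act S₂.aut) →ₗ[k]
        ((M₃ ⊗[k] A) ⧸ relSubR Ac.mul Ac.aut Bset S₃.act S₃.aut)),
      fbar ∘ₗ (relSubR Ac.mul Ac.aut Bset S₁.act S₁.aut).mkQ =
        (relSubR Ac.mul Ac.aut Bset S₂.act S₂.aut).mkQ ∘ₗ TensorProduct.map f LinearMap.id →
      gbar ∘ₗ (relSubR Ac.mul Ac.aut Bset S₂.act S₂.aut).mkQ =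
        (relSubR Ac.mul Ac.aut Bset S₃.act S₃.aut).mkQ ∘ₗ TensorProduct.map g LinearMap.id →
      (LinearMap.range f = LinearMap.ker g → LinearMap.range fbar = LinearMap.ker gbar)

end

/-!
The map `λ` induces on every `M ⊗ N` the endomorphism `m ⊗ n ↦ λ (μ⁻¹ m ⊗ n₍₋₁₎) ⊗ ν n₍₀₎`.
Since `λ ∘ ρ = id` it fixes `M □ N`, and since `λ` is colinear it takes values there, so `M □ N` is
its range.  It is natural in `N`, hence the cotensor product inherits surjectivity from `M ⊗ -`.
-/

variable {R H M N W : Type*} [CommSemiring R] [AddCommMonoid H] [Module R H]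
  [AddCommMonoid M] [Module R M] [AddCommMonoid N] [Module R N] [AddCommMonoid W] [Module R W]

/-- The axioms of a left Hom-comodule `(N, ν)` with coaction `δ`, apart from counitality, over
a module `H` with comultiplication `comul` and structure automorphism `α`. -/
structure IsLeftHomCoaction (comul : H →ₗ[R] H ⊗[R] H) (α : H ≃ₗ[R] H)
    (δ : N →ₗ[R] H ⊗[R] N) (ν : N ≃ₗ[R] N) : Prop where
  coassoc : map comul ν.symm.toLinearMap ∘ₗ δ =
    (TensorProduct.assoc R H H N).symm.toLinearMap ∘ₗ map α.symm.toLinearMap δ ∘ₗ δ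
  coact_aut : δ ∘ₗ ν.toLinearMap = map α.toLinearMap ν.toLinearMap ∘ₗ δ

/-- A right colinear retraction `lam` of the coaction `ρ` on `(M, μ)`, where `M ⊗ H` carries the
automorphism `μ ⊗ α` and the coaction `m ⊗ h ↦ (μ⁻¹ m ⊗ h₁) ⊗ α h₂`. -/
structure IsColinearRetraction (comul : H →ₗ[R] H ⊗[R] H) (α : H ≃ₗ[R] H)
    (ρ : M →ₗ[R] M ⊗[R] H) (μ : M ≃ₗ[R] M) (lam : M ⊗[R] H →ₗ[R] M) : Prop where
  retract_comp_coact : lam ∘ₗ ρ = LinearMap.id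
  retract_aut : lam ∘ₗ map μ.toLinearMap α.toLinearMap = μ.toLinearMap ∘ₗ lam
  colinear : ρ ∘ₗ lam = map lam LinearMap.id ∘ₗ map LinearMap.id α.toLinearMap ∘ₗ
    (TensorProduct.assoc R M H H).symm.toLinearMap ∘ₗ map μ.symm.toLinearMap comul

/-- The cotensor product `M □ N` of a right coaction `ρ` on `(M, μ)` and a left coaction `δ` on
`(N, ν)`, as an equalizer, so that no subtraction is needed. -/
def homCotensor (ρ : M →ₗ[R] M ⊗[R] H) (μ : M ≃ₗ[R] M) (δ : N →ₗ[R] H ⊗[R] N) (ν : N ≃ₗ[R] N) :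
    Submodule R (M ⊗[R] N) :=
  LinearMap.eqLocus (map ρ ν.symm.toLinearMap)
    ((TensorProduct.assoc R M H N).symm.toLinearMap ∘ₗ map μ.symm.toLinearMap δ)

/-- The endomorphism `m ⊗ n ↦ lam (μ⁻¹ m ⊗ n₍₋₁₎) ⊗ ν n₍₀₎` of `M ⊗ N`, which projects onto the
cotensor product when `lam` is a colinear retraction. -/
noncomputable def homCotensorProj (lam : M ⊗[R] H →ₗ[R] M) (μ : M ≃ₗ[R] M)
    (δ : N →ₗ[R] H ⊗[R] N) (ν : N ≃ₗ[R] N) : M ⊗[R] N →ₗ[R] M ⊗[R] N :=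
  map lam ν.toLinearMap ∘ₗ (TensorProduct.assoc R M H N).symm.toLinearMap ∘ₗ
    map μ.symm.toLinearMap δ

/-- The map `m ⊗ ((h ⊗ h') ⊗ n) ↦ (lam (m ⊗ h) ⊗ α h') ⊗ ν n`, through which both sides of the
cotensor condition factor on the image of `homCotensorProj`. -/
noncomputable def retractFirstLeg (lam : M ⊗[R] H →ₗ[R] M) (α : H ≃ₗ[R] H) (ν : N ≃ₗ[R] N) :
    M ⊗[R] ((H ⊗[R] H) ⊗[R] N) →ₗ[R] (M ⊗[R] H) ⊗[R] N :=
  map (map lam α.toLinearMap ∘ₗ (TensorProduct.assoc R M H H).symm.toLinearMap) ν.toLinearMap ∘ₗ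
    (TensorProduct.assoc R M (H ⊗[R] H) N).symm.toLinearMap

theorem retractFirstLeg_tmul_assoc_symm (lam : M ⊗[R] H →ₗ[R] M) (α : H ≃ₗ[R] H) (ν : N ≃ₗ[R] N)
    (m : M) (h : H) (y : H ⊗[R] N) :
    retractFirstLeg lam α ν (m ⊗ₜ (TensorProduct.assoc R H H N).symm (h ⊗ₜ y)) =
      (TensorProduct.assoc R M H N).symm
        (lam (m ⊗ₜ h) ⊗ₜ map α.toLinearMap ν.toLinearMap y) := by
  induction y with
  | zero => simp
  | add y z hy hz => simp only [tmul_add, map_add, hy, hz]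
  | tmul h' n => simp [retractFirstLeg]

section Projection

variable {comul : H →ₗ[R] H ⊗[R] H} {α : H ≃ₗ[R] H} {ρ : M →ₗ[R] M ⊗[R] H} {μ : M ≃ₗ[R] M}
  {lam : M ⊗[R] H →ₗ[R] M} {δ : N →ₗ[R] H ⊗[R] N} {ν : N ≃ₗ[R] N}

theorem IsColinearRetraction.aut_symm_apply_tmul (hlam : IsColinearRetraction comul α ρ μ lam)
    (m : M) (h : H) : μ.symm (lam (m ⊗ₜ h)) = lam (μ.symm m ⊗ₜ α.symm h) := by
  rw [LinearEquiv.symm_apply_eq]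
  simpa using LinearMap.congr_fun hlam.retract_aut (μ.symm m ⊗ₜ α.symm h)

theorem IsColinearRetraction.map_coact_comp_homCotensorProj
    (hlam : IsColinearRetraction comul α ρ μ lam) (δ : N →ₗ[R] H ⊗[R] N) (ν : N ≃ₗ[R] N) :
    map ρ ν.symm.toLinearMap ∘ₗ homCotensorProj lam μ δ ν =
      retractFirstLeg lam α ν ∘ₗ
        map (μ.symm.toLinearMap ∘ₗ μ.symm.toLinearMap) (map comul ν.symm.toLinearMap ∘ₗ δ) := by
  have colinear_factor : map ρ ν.symm.toLinearMap ∘ₗ map lam ν.toLinearMap ∘ₗ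
        (TensorProduct.assoc R M H N).symm.toLinearMap =
      retractFirstLeg lam α ν ∘ₗ map μ.symm.toLinearMap (map comul ν.symm.toLinearMap) := by
    ext m h n
    have hρ := LinearMap.congr_fun hlam.colinear (m ⊗ₜ h)
    simp only [← LinearMap.comp_assoc, ← map_comp, LinearMap.id_comp, LinearMap.comp_id] at hρ
    simpa [retractFirstLeg] using congrArg (· ⊗ₜ[R] n) hρ
  rw [map_comp, ← LinearMap.comp_assoc, ← colinear_factor]
  rfl

theorem IsColinearRetraction.map_aut_symm_comp_homCotensorProj
    (hlam : IsColinearRetraction comul α ρ μ lam)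
    (hδ : δ ∘ₗ ν.toLinearMap = map α.toLinearMap ν.toLinearMap ∘ₗ δ) :
    ((TensorProduct.assoc R M H N).symm.toLinearMap ∘ₗ map μ.symm.toLinearMap δ) ∘ₗ
        homCotensorProj lam μ δ ν =
      retractFirstLeg lam α ν ∘ₗ map (μ.symm.toLinearMap ∘ₗ μ.symm.toLinearMap)
        ((TensorProduct.assoc R H H N).symm.toLinearMap ∘ₗ map α.symm.toLinearMap δ ∘ₗ δ) := by
  have aut_factor : ((TensorProduct.assoc R M H N).symm.toLinearMap ∘ₗ map μ.symm.toLinearMap δ) ∘ₗ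
        map lam ν.toLinearMap ∘ₗ (TensorProduct.assoc R M H N).symm.toLinearMap =
      retractFirstLeg lam α ν ∘ₗ map μ.symm.toLinearMap
        ((TensorProduct.assoc R H H N).symm.toLinearMap ∘ₗ map α.symm.toLinearMap δ) := by
    ext m h n
    have hδn : δ (ν n) = map α.toLinearMap ν.toLinearMap (δ n) := LinearMap.congr_fun hδ n
    simp [hδn, hlam.aut_symm_apply_tmul, retractFirstLeg_tmul_assoc_symm]
  rw [← LinearMap.comp_assoc δ, map_comp, ← LinearMap.comp_assoc, ← aut_factor]
  rfl

theorem IsColinearRetraction.homCotensorProj_mem (hlam : IsColinearRetraction comul α ρ μ lam)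
    (hN : IsLeftHomCoaction comul α δ ν) (x : M ⊗[R] N) :
    homCotensorProj lam μ δ ν x ∈ homCotensor ρ μ δ ν := by
  have equalized : map ρ ν.symm.toLinearMap ∘ₗ homCotensorProj lam μ δ ν =
      ((TensorProduct.assoc R M H N).symm.toLinearMap ∘ₗ map μ.symm.toLinearMap δ) ∘ₗ
        homCotensorProj lam μ δ ν := by
    rw [hlam.map_coact_comp_homCotensorProj, hlam.map_aut_symm_comp_homCotensorProj hN.coact_aut,
      hN.coassoc]
  exact LinearMap.congr_fun equalized x

theorem homCotensorProj_eq_self (hretract : lam ∘ₗ ρ = LinearMap.id) {t : M ⊗[R] N}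
    (ht : t ∈ homCotensor ρ μ δ ν) : homCotensorProj lam μ δ ν t = t :=
  calc homCotensorProj lam μ δ ν t
      = map lam ν.toLinearMap (map ρ ν.symm.toLinearMap t) :=
        congrArg (map lam ν.toLinearMap) (LinearMap.mem_eqLocus.mp ht).symm
    _ = t := by rw [map_map, hretract]; simp

theorem IsColinearRetraction.range_homCotensorProj (hlam : IsColinearRetraction comul α ρ μ lam)
    (hN : IsLeftHomCoaction comul α δ ν) :
    (homCotensorProj lam μ δ ν).range = homCotensor ρ μ δ ν := by
  apply le_antisymm
  · rintro _ ⟨x, rfl⟩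
    exact hlam.homCotensorProj_mem hN x
  · exact fun t ht => ⟨t, homCotensorProj_eq_self hlam.retract_comp_coact ht⟩

theorem lTensor_comp_homCotensorProj (lam : M ⊗[R] H →ₗ[R] M) (μ : M ≃ₗ[R] M)
    {δ' : W →ₗ[R] H ⊗[R] W} {ω : W ≃ₗ[R] W} {f : N →ₗ[R] W}
    (hf_coact : δ' ∘ₗ f = map LinearMap.id f ∘ₗ δ)
    (hf_aut : f ∘ₗ ν.toLinearMap = ω.toLinearMap ∘ₗ f) :
    f.lTensor M ∘ₗ homCotensorProj lam μ δ ν = homCotensorProj lam μ δ' ω ∘ₗ f.lTensor M := by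
  have assoc_symm_lTensor : (TensorProduct.assoc R M H W).symm.toLinearMap ∘ₗ
        (f.lTensor H).lTensor M =
      f.lTensor (M ⊗[R] H) ∘ₗ (TensorProduct.assoc R M H N).symm.toLinearMap := by
    ext; simp
  calc f.lTensor M ∘ₗ homCotensorProj lam μ δ ν
      = map lam (ω.toLinearMap ∘ₗ f) ∘ₗ (TensorProduct.assoc R M H N).symm.toLinearMap ∘ₗ
          map μ.symm.toLinearMap δ := by
        rw [homCotensorProj, ← LinearMap.comp_assoc, LinearMap.lTensor_comp_map, hf_aut]
    _ = map lam ω.toLinearMap ∘ₗ (TensorProduct.assoc R M H W).symm.toLinearMap ∘ₗ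
          map μ.symm.toLinearMap (f.lTensor H ∘ₗ δ) := by
        rw [← LinearMap.map_comp_lTensor, ← LinearMap.lTensor_comp_map, LinearMap.comp_assoc,
          ← LinearMap.comp_assoc _ _ (f.lTensor _), ← assoc_symm_lTensor, LinearMap.comp_assoc]
    _ = homCotensorProj lam μ δ' ω ∘ₗ f.lTensor M := by
        rw [LinearMap.lTensor, ← hf_coact, homCotensorProj, LinearMap.comp_assoc,
          LinearMap.comp_assoc, LinearMap.map_comp_lTensor]

end Projection

theorem statement16_general {comul : H →ₗ[R] H ⊗[R] H} {α : H ≃ₗ[R] H}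
    {ρ : M →ₗ[R] M ⊗[R] H} {μ : M ≃ₗ[R] M} {lam : M ⊗[R] H →ₗ[R] M}
    {δ : N →ₗ[R] H ⊗[R] N} {ν : N ≃ₗ[R] N} {δ' : W →ₗ[R] H ⊗[R] W} {ω : W ≃ₗ[R] W}
    (hlam : IsColinearRetraction comul α ρ μ lam)
    (hN : IsLeftHomCoaction comul α δ ν) (hW : IsLeftHomCoaction comul α δ' ω)
    {f : N →ₗ[R] W} (hf_coact : δ' ∘ₗ f = map LinearMap.id f ∘ₗ δ)
    (hf_aut : f ∘ₗ ν.toLinearMap = ω.toLinearMap ∘ₗ f) (hf : Function.Surjective f) :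
    (homCotensor ρ μ δ ν).map (f.lTensor M) = homCotensor ρ μ δ' ω := by
  have hf_range : (f.lTensor M).range = ⊤ :=
    LinearMap.range_eq_top.mpr (LinearMap.lTensor_surjective M hf)
  rw [← hlam.range_homCotensorProj hN, ← LinearMap.range_comp,
    lTensor_comp_homCotensorProj lam μ hf_coact hf_aut,
    LinearMap.range_comp_of_range_eq_top _ hf_range, hlam.range_homCotensorProj hW]

theorem cotensorSub_eq_homCotensor {k H X V : Type} [Field k] [AddCommGroup H] [Module k H]
    [AddCommGroup X] [Module k X] [AddCommGroup V] [Module k V]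
    (coactX : X →ₗ[k] X ⊗[k] H) (autX : X ≃ₗ[k] X)
    (coactV : V →ₗ[k] H ⊗[k] V) (autV : V ≃ₗ[k] V) :
    cotensorSub coactX autX coactV autV = homCotensor coactX autX coactV autV :=
  (LinearMap.eqLocus_eq_ker_sub _ _).symm

/-! STATEMENT 16: A right Hom-comodule `M` whose coaction admits a colinear
retraction (i.e. `M` is injective/relative-injective) is right (H,α)-coflat. -/
theorem statement16
    (k : Type) [Field k] (H : Type) [AddCommGroup H] [Module k H]
    (Hh : MonoidalHomHopf k H)
    (M : Type) [AddCommGroup M] [Module k M]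
    (Mc : HomComodule Hh.toMonoidalHomBialgebra M)
    -- λ_M is a right (H,α)-colinear retraction of ρ_M
    (lamM : M ⊗[k] H →ₗ[k] M)
    (hlam₁ : lamM ∘ₗ Mc.coact = LinearMap.id)
    (hlam₂ : lamM ∘ₗ (TensorProduct.map Mc.aut.toLinearMap Hh.aut.toLinearMap) =
      Mc.aut.toLinearMap ∘ₗ lamM)
    (hlam₃ : Mc.coact ∘ₗ lamM =
      (TensorProduct.map lamM LinearMap.id) ∘ₗ
        (TensorProduct.map LinearMap.id Hh.aut.toLinearMap) ∘ₗ
          (TensorProduct.assoc k M H H).symm.toLinearMap ∘ₗ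
            (TensorProduct.map Mc.aut.symm.toLinearMap Hh.comul)) :
    -- M is right (H,α)-coflat
    ∀ (N W : Type) [AddCommGroup N] [Module k N] [AddCommGroup W] [Module k W]
      (Nc : HomLeftComodule Hh.toMonoidalHomBialgebra N)
      (Wc : HomLeftComodule Hh.toMonoidalHomBialgebra W)
      (f : N →ₗ[k] W),
      Wc.coact ∘ₗ f = (TensorProduct.map LinearMap.id f) ∘ₗ Nc.coact →
      f ∘ₗ Nc.aut.toLinearMap = Wc.aut.toLinearMap ∘ₗ f →
      Function.Surjective f →
      ∀ t ∈ cotensorSub Mc.coact Mc.aut Wc.coact Wc.aut,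
        ∃ s ∈ cotensorSub Mc.coact Mc.aut Nc.coact Nc.aut,
          (TensorProduct.map (LinearMap.id (M := M)) f) s = t := by
  intro N W _ _ _ _ Nc Wc f hf_coact hf_aut hf
  simp only [cotensorSub_eq_homCotensor]
  exact (statement16_general ⟨hlam₁, hlam₂, hlam₃⟩ ⟨Nc.coassoc, Nc.coact_aut⟩
    ⟨Wc.coassoc, Wc.coact_aut⟩ hf_coact hf_aut hf).ge
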